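/- Let n ≥ 5 and let d̂ be the sequence consisting of two entries equal to 2n−2 followed by n−2 entries equal to n−1. Then the minimum of MaxMult(H) over all multigraph realizations H of d̂ equals 2; moreover, every multigraph realization H of d̂ with MaxMult(H) = 2 satisfies TotMult(H) ≥ 2n−3. -/

import Mathlib

/-!
A vertex of a loopless multigraph on `n` vertices has degree at most `(n - 1) * MaxMult`, so a
vertex of degree `2n - 2` forces `MaxMult ≥ 2`, and when `MaxMult = 2` it must be joined by a
double edge to every other vertex (`m_eq_two`). The two vertices of degree `2n - 2` are therefore
incident with `2(n - 2) + 1 = 2n - 3` double edges, which gives the bound on `TotMult`; the count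
is made on the doubled sum over ordered pairs (`two_mul_totMult`).

For the existence of a realization with `MaxMult = 2`, these `2n - 3` double edges contribute `4`
to each of the remaining `n - 2` vertices, which still need degree `n - 5 ≥ 0` among themselves:
the complement of a Hamiltonian cycle on `n - 2 ≥ 3` vertices is `(n - 5)`-regular (`witness`).
-/

/-- A loopless multigraph on vertex set `Fin N`, given by symmetric edge
multiplicities with zero diagonal; `m v u` is the number of parallel edges
between `v` and `u`. -/
structure Multigraph (N : ℕ) where
  m : Fin N → Fin N → ℕ
  symm : ∀ v u, m v u = m u v
  loopless : ∀ v, m v v = 0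

namespace Multigraph

variable {N : ℕ}

/-- The degree of a vertex. -/
def deg (H : Multigraph N) (v : Fin N) : ℕ := ∑ u, H.m v u

/-- `H` realizes the sequence `d 1, d 2, …, d n` (1-indexed): the multiset of
vertex degrees equals the multiset of entries of the sequence. -/
def Realizes (H : Multigraph N) (n : ℕ) (d : ℕ → ℕ) : Prop :=
  Multiset.map H.deg Finset.univ.val = Multiset.map d (Finset.Icc 1 n).val

/-- Total multiplicity: the number of excess edge copies, summed over unordered
pairs of vertices (pairs with multiplicity `0` contribute `0`). -/
def totMult (H : Multigraph N) : ℕ :=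
  ∑ v : Fin N, ∑ u ∈ Finset.univ.filter (fun u => v < u), (H.m v u - 1)

/-- Maximum multiplicity: the largest number of parallel edges between any two
vertices. -/
def maxMult (H : Multigraph N) : ℕ :=
  Finset.univ.sup fun p : Fin N × Fin N => H.m p.1 p.2

/-- All multiplicities are at most `1`, i.e. `H` is a simple graph. -/
def Simple (H : Multigraph N) : Prop := ∀ v u, H.m v u ≤ 1

/-- The underlying simple graph of `H` is bipartite: the vertices can be split
into two classes such that every edge crosses between the classes. -/
def Bipartite (H : Multigraph N) : Prop :=
  ∃ S : Set (Fin N), ∀ v u, 1 ≤ H.m v u → (v ∈ S ↔ u ∉ S)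

end Multigraph

namespace Multigraph

variable {N : ℕ}

lemma m_le_maxMult (H : Multigraph N) (v u : Fin N) : H.m v u ≤ H.maxMult :=
  Finset.le_sup (f := fun p : Fin N × Fin N => H.m p.1 p.2) (Finset.mem_univ (v, u))

lemma deg_eq_sum_erase (H : Multigraph N) (v : Fin N) :
    H.deg v = ∑ u ∈ Finset.univ.erase v, H.m v u := by
  rw [deg, ← Finset.add_sum_erase _ _ (Finset.mem_univ v), H.loopless, zero_add]

lemma deg_le (H : Multigraph N) (v : Fin N) : H.deg v ≤ (N - 1) * H.maxMult := by
  rw [deg_eq_sum_erase]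
  refine (Finset.sum_le_card_nsmul _ _ H.maxMult fun u _ => H.m_le_maxMult v u).trans ?_
  simp [Finset.card_erase_of_mem]

/-- If all multiplicities are at most `2`, a vertex of degree `2N - 2` attains the maximal
possible degree, hence is joined by a double edge to every other vertex. -/
lemma m_eq_two (H : Multigraph N) (hH : H.maxMult = 2) {v : Fin N} (hv : H.deg v = 2 * N - 2)
    {u : Fin N} (hu : u ≠ v) : H.m v u = 2 := by
  have hle : ∀ w ∈ Finset.univ.erase v, H.m v w ≤ 2 := fun w _ => hH ▸ H.m_le_maxMult v w
  have hsum : ∑ w ∈ Finset.univ.erase v, H.m v w = ∑ w ∈ Finset.univ.erase v, 2 := by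
    rw [← deg_eq_sum_erase, hv]
    simp [Finset.card_erase_of_mem]
    omega
  exact (Finset.sum_eq_sum_iff_of_le hle).1 hsum u (by simp [hu])

/-- Each unordered pair is counted twice in the sum over ordered pairs; the diagonal terms are
`0 - 1 = 0` in `ℕ`. -/
lemma two_mul_totMult (H : Multigraph N) :
    2 * H.totMult = ∑ v : Fin N, ∑ u : Fin N, (H.m v u - 1) := by
  have hswap : H.totMult = ∑ v : Fin N, ∑ u : Fin N, if u < v then H.m v u - 1 else 0 := by
    rw [Finset.sum_comm]
    simp only [totMult, Finset.sum_filter, H.symm]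
  rw [two_mul]
  nth_rewrite 2 [hswap]
  simp only [totMult, Finset.sum_filter, ← Finset.sum_add_distrib]
  refine Finset.sum_congr rfl fun v _ => Finset.sum_congr rfl fun u _ => ?_
  rcases lt_trichotomy v u with h | rfl | h
  · simp [h, h.not_gt]
  · simp [H.loopless]
  · simp [h, h.not_gt]

lemma le_totMult (H : Multigraph N) (hN : 5 ≤ N) (hH : H.maxMult = 2) {a b : Fin N} (hab : a ≠ b)
    (ha : H.deg a = 2 * N - 2) (hb : H.deg b = 2 * N - 2) : 2 * N - 3 ≤ H.totMult := by
  have hrow : ∀ v, H.deg v = 2 * N - 2 → ∑ u : Fin N, (H.m v u - 1) = N - 1 := by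
    intro v hv
    rw [← Finset.add_sum_erase _ _ (Finset.mem_univ v), H.loopless,
      Finset.sum_congr rfl (g := fun _ => 1)
        (fun u hu => by rw [H.m_eq_two hH hv (Finset.ne_of_mem_erase hu)])]
    simp [Finset.card_erase_of_mem]
  have hother : ∀ v, v ≠ a → v ≠ b → 2 ≤ ∑ u : Fin N, (H.m v u - 1) := by
    intro v hva hvb
    calc 2 = ∑ u ∈ {a, b}, (H.m v u - 1) := by
          rw [Finset.sum_pair hab, H.symm v a, H.symm v b, H.m_eq_two hH ha hva,
            H.m_eq_two hH hb hvb]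
      _ ≤ _ := Finset.sum_le_sum_of_subset (Finset.subset_univ _)
  have key : ∑ v : Fin N, (2 + (if v = a then N - 3 else 0) + (if v = b then N - 3 else 0)) ≤
      ∑ v : Fin N, ∑ u : Fin N, (H.m v u - 1) := by
    refine Finset.sum_le_sum fun v _ => ?_
    by_cases hva : v = a
    · subst hva
      rw [hrow v ha]; simp [hab]; omega
    · by_cases hvb : v = b
      · subst hvb
        rw [hrow v hb]; simp [hva]; omega
      · simpa [hva, hvb] using hother v hva hvb
  rw [← two_mul_totMult] at key
  simp [Finset.sum_add_distrib] at key
  omega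

/-- A realization of `d̂` has `n` vertices, two of which have degree `2n - 2`. -/
lemma Realizes.exists_pair {n : ℕ} (hn : 5 ≤ n) {H : Multigraph N}
    (h : H.Realizes n (fun i => if i ≤ 2 then 2 * n - 2 else n - 1)) :
    N = n ∧ ∃ a b, a ≠ b ∧ H.deg a = 2 * n - 2 ∧ H.deg b = 2 * n - 2 := by
  refine ⟨by simpa using congrArg Multiset.card h, ?_⟩
  have hc := congrArg (Multiset.count (2 * n - 2)) h
  rw [Multiset.count_map, Multiset.count_map] at hc
  change (Finset.univ.filter fun v => 2 * n - 2 = H.deg v).card =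
    ((Finset.Icc 1 n).filter fun i => 2 * n - 2 = if i ≤ 2 then 2 * n - 2 else n - 1).card at hc
  have hsub : ({1, 2} : Finset ℕ) ⊆
      (Finset.Icc 1 n).filter fun i => 2 * n - 2 = if i ≤ 2 then 2 * n - 2 else n - 1 := by
    intro i hi
    simp only [Finset.mem_insert, Finset.mem_singleton] at hi
    rcases hi with rfl | rfl <;> simp <;> omega
  have h2 : 1 < (Finset.univ.filter fun v => 2 * n - 2 = H.deg v).card := by
    rw [hc]
    exact Finset.card_le_card hsub
  obtain ⟨a, ha, b, hb, hab⟩ := Finset.one_lt_card.1 h2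
  exact ⟨a, b, hab, (Finset.mem_filter.1 ha).2.symm, (Finset.mem_filter.1 hb).2.symm⟩

/-- The extremal multigraph: `0` and `1` are joined to every other vertex by a double edge, and
the vertices `2, …, n - 1` span the complement of the cycle `2, 3, …, n - 1, 2`. -/
def witness (n : ℕ) : Multigraph n where
  m v u :=
    if v = u then 0
    else if v.val < 2 ∨ u.val < 2 then 2
    else if v.val + 1 = u.val ∨ u.val + 1 = v.val ∨ (v.val = 2 ∧ u.val + 1 = n) ∨
      (u.val = 2 ∧ v.val + 1 = n) then 0
    else 1
  symm v u := by
    simp only [Fin.ext_iff]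
    split_ifs <;> omega
  loopless v := by simp

lemma witness_deg_of_lt {n : ℕ} (v : Fin n) (hv : v.val < 2) :
    (witness n).deg v = 2 * n - 2 := by
  rw [deg_eq_sum_erase, Finset.sum_congr rfl (g := fun _ => 2)
    (fun u hu => by
      simp only [witness, if_neg (Finset.ne_of_mem_erase hu).symm, hv, true_or, if_true])]
  simp [Finset.card_erase_of_mem]
  omega

lemma witness_deg_of_le {n : ℕ} (hn : 5 ≤ n) (v : Fin n) (hv : 2 ≤ v.val) :
    (witness n).deg v = n - 1 := by
  -- `s` and `p` are the successor and the predecessor of `v` on the cycle.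
  obtain ⟨s, hs⟩ : ∃ s : Fin n, s.val = if v.val + 1 = n then 2 else v.val + 1 :=
    ⟨⟨if v.val + 1 = n then 2 else v.val + 1, by split_ifs <;> omega⟩, rfl⟩
  obtain ⟨p, hp⟩ : ∃ p : Fin n, p.val = if v.val = 2 then n - 1 else v.val - 1 :=
    ⟨⟨if v.val = 2 then n - 1 else v.val - 1, by split_ifs <;> omega⟩, rfl⟩
  have hterm : ∀ u : Fin n, (witness n).m v u + (if u = v then 1 else 0) +
      (if u = s then 1 else 0) + (if u = p then 1 else 0) =
      1 + (if u = ⟨0, by omega⟩ then 1 else 0) + (if u = ⟨1, by omega⟩ then 1 else 0) := by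
    intro u
    have hvn := v.isLt
    have hun := u.isLt
    simp only [witness, Fin.ext_iff]
    split_ifs at * <;> omega
  have hsum := Finset.sum_congr (rfl : (Finset.univ : Finset (Fin n)) = _) fun u _ => hterm u
  simp only [Finset.sum_add_distrib, Finset.sum_ite_eq', Finset.mem_univ, if_true] at hsum
  simp at hsum
  rw [deg]
  omega

lemma witness_realizes {n : ℕ} (hn : 5 ≤ n) :
    (witness n).Realizes n (fun i => if i ≤ 2 then 2 * n - 2 else n - 1) := by
  have hIcc : Finset.Icc 1 n =
      (Finset.univ : Finset (Fin n)).map (Fin.valEmbedding.trans (addRightEmbedding 1)) := by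
    ext i
    simp only [Finset.mem_Icc, Finset.mem_map, Finset.mem_univ, true_and]
    constructor
    · rintro ⟨h1, h2⟩
      exact ⟨⟨i - 1, by omega⟩, by simp; omega⟩
    · rintro ⟨v, rfl⟩
      have := v.isLt
      simp
  rw [Realizes, hIcc, Finset.map_val, Multiset.map_map]
  refine Multiset.map_congr rfl fun v _ => ?_
  by_cases hv : v.val < 2
  · rw [witness_deg_of_lt v hv]
    simp; omega
  · rw [witness_deg_of_le hn v (by omega)]
    simp; omega

lemma witness_maxMult {n : ℕ} (hn : 5 ≤ n) : (witness n).maxMult = 2 := by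
  apply le_antisymm
  · refine Finset.sup_le fun q _ => ?_
    simp only [witness]
    split_ifs <;> omega
  · have h := (witness n).m_le_maxMult ⟨0, by omega⟩ ⟨1, by omega⟩
    simpa [witness] using h

end Multigraph

/-- Let `n ≥ 5` and let `d̂` be the sequence with two entries
`2n−2` followed by `n−2` entries `n−1`. The minimum of `MaxMult` over all
multigraph realizations of `d̂` equals `2`, and every realization with maximum
multiplicity `2` has total multiplicity at least `2n−3`. -/
theorem stmt6 (n : ℕ) (hn : 5 ≤ n) :
    IsLeast {k : ℕ | ∃ (N : ℕ) (H : Multigraph N),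
        H.Realizes n (fun i => if i ≤ 2 then 2 * n - 2 else n - 1) ∧
          H.maxMult = k} 2 ∧
      ∀ (N : ℕ) (H : Multigraph N),
        H.Realizes n (fun i => if i ≤ 2 then 2 * n - 2 else n - 1) →
          H.maxMult = 2 → 2 * n - 3 ≤ H.totMult := by
  refine ⟨⟨⟨n, _, Multigraph.witness_realizes hn, Multigraph.witness_maxMult hn⟩, ?_⟩, ?_⟩
  · rintro k ⟨N, H, hH, rfl⟩
    obtain ⟨rfl, a, -, -, ha, -⟩ := hH.exists_pair hn
    have h := H.deg_le a
    by_contra! hlt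
    have : (N - 1) * H.maxMult ≤ (N - 1) * 1 := Nat.mul_le_mul_left _ (by omega)
    omega
  · intro N H hH hmax
    obtain ⟨rfl, a, b, hab, ha, hb⟩ := hH.exists_pair hn
    exact H.le_totMult hn hmax hab ha hb
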